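/- Correctness of the NP-hardness reduction: Let φ = κ₁ ∨ … ∨ κₙ be a propositional formula in 3DNF over a finite set V of variables, where each κᵢ = λᵢ¹ ∧ λᵢ² ∧ λᵢ³ is a conjunction of three literals. Using concept names A_x and A_{¬x} for each x ∈ V, B_i for 1 ≤ i ≤ n, and C, let T_φ = {A_{λᵢ¹} ⊓ A_{λᵢ²} ⊓ A_{λᵢ³} ⊑ B_i : 1 ≤ i ≤ n} ∪ {B_i ⊑ C : 1 ≤ i ≤ n} and C_φ = {(A_x|⊤)[1/2,1], (A_{¬x}|⊤)[1/2,1], (A_{¬x}|A_x)[0,0] : x ∈ V} ∪ {(C|⊤)[0,1/2]}. Then φ is valid (true under every truth assignment to V) if and only if the knowledge base K_φ = (T_φ, C_φ) is inconsistent, i.e., no finite interpretation satisfies all GCIs in T_φ and all conditionals in C_φ. -/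

import Mathlib

open scoped Classical

/-- ALC concepts over concept names and role names (both drawn from ℕ,
regarded as disjoint name spaces). -/
inductive Cpt : Type where
  | top : Cpt
  | atom : ℕ → Cpt
  | neg : Cpt → Cpt
  | inter : Cpt → Cpt → Cpt
  | ex : ℕ → Cpt → Cpt
deriving DecidableEq

/-- A finite interpretation with domain drawn from the type `α`. -/
structure Interp (α : Type) where
  dom : Finset α
  dom_nonempty : dom.Nonempty
  conc : ℕ → Finset α
  conc_sub : ∀ a, conc a ⊆ dom
  role : ℕ → Finset (α × α)
  role_sub : ∀ r, role r ⊆ dom ×ˢ dom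

/-- The extension `C^I` of a concept. -/
noncomputable def Interp.ext {α : Type} (I : Interp α) : Cpt → Finset α
  | .top => I.dom
  | .atom a => I.conc a
  | .neg c => I.dom \ I.ext c
  | .inter c d => I.ext c ∩ I.ext d
  | .ex r c => I.dom.filter (fun d => ∃ e ∈ I.ext c, (d, e) ∈ I.role r)

/-- `[C]^I`, the cardinality of the extension of `C`. -/
noncomputable def cardC {α : Type} (I : Interp α) (c : Cpt) : ℕ := (I.ext c).card

/-- A probabilistic conditional `(C|D)[l,u]`. -/
structure Cond : Type where
  C : Cpt
  D : Cpt
  l : ℚ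
  u : ℚ
deriving DecidableEq

/-- `I ⊨ (C|D)[l,u]` iff `[D]^I = 0` or `l ≤ [C ⊓ D]^I/[D]^I ≤ u`. -/
def satCond {α : Type} (I : Interp α) (κ : Cond) : Prop :=
  cardC I κ.D = 0 ∨
    (κ.l ≤ (cardC I (.inter κ.C κ.D) : ℚ) / (cardC I κ.D : ℚ) ∧
     (cardC I (.inter κ.C κ.D) : ℚ) / (cardC I κ.D : ℚ) ≤ κ.u)

/-- Finite interpretations (with domain drawn from the countable set ℕ). -/
abbrev FInterp := Interp ℕ

/-- The models of a knowledge base (finite set of conditionals). -/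
def Models (K : Finset Cond) : Set FInterp := {I | ∀ κ ∈ K, satCond I κ}

/-- l-entailment: every model of `K` satisfies the conditional. -/
def entailsL (K : Finset Cond) (κ : Cond) : Prop := ∀ I ∈ Models K, satCond I κ

/-- Concept name `A_x` for the positive literal on variable `x`
(`Nat.pair` is used to keep the name spaces disjoint). -/
def Apos (x : ℕ) : Cpt := .atom (Nat.pair 0 (Nat.pair x 1))

/-- Concept name `A_{¬x}` for the negative literal on variable `x`. -/
def Aneg (x : ℕ) : Cpt := .atom (Nat.pair 0 (Nat.pair x 0))

/-- The concept name `A_λ` associated with a literal `λ` (variable, polarity). -/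
def Alit (lit : ℕ × Bool) : Cpt := if lit.2 then Apos lit.1 else Aneg lit.1

/-- Concept name `B_i` for the `i`-th clause. -/
def Bcl (i : ℕ) : Cpt := .atom (Nat.pair 1 i)

/-- The concept name `C`. -/
def Ccpt : Cpt := .atom (Nat.pair 2 0)

/-!
In a model of `K_φ` the sets `A_x` and `A_{¬x}` are disjoint and each fills at least half of the
domain, so they partition it: every domain element `d` behaves like a truth assignment. At most half
of the elements lie in `C`, so some `d` lies outside `C`, hence outside every `B_i`, and its
assignment falsifies every clause. Conversely, an assignment `v` falsifying `φ` yields a model with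
two elements, one realising `v` and the other its complement: each literal holds at exactly one of
them, and letting `B_i` and `C` hold only at the second is enough, since no clause is true at the
first.
-/

namespace Interp

variable {α : Type}

theorem ext_subset_dom (I : Interp α) (c : Cpt) : I.ext c ⊆ I.dom := by
  induction c with
  | top => exact subset_rfl
  | atom a => exact I.conc_sub a
  | neg c _ => exact Finset.sdiff_subset
  | inter c d hc _ => exact Finset.inter_subset_left.trans hc
  | ex r c _ => exact Finset.filter_subset _ _

theorem cast_card_dom_pos (I : Interp α) : (0 : ℚ) < I.dom.card :=
  Nat.cast_pos.mpr I.dom_nonempty.card_pos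

end Interp

section Conditionals

variable {α : Type} {I : Interp α} {c d : Cpt} {l l' u u' : ℚ}

theorem satCond_top_iff :
    satCond I ⟨c, .top, l, u⟩ ↔
      l * I.dom.card ≤ (I.ext c).card ∧ ((I.ext c).card : ℚ) ≤ u * I.dom.card := by
  have inter_top : I.ext c ∩ I.dom = I.ext c := Finset.inter_eq_left.mpr (I.ext_subset_dom c)
  simp only [satCond, cardC, Interp.ext, inter_top, I.dom_nonempty.card_pos.ne', false_or,
    le_div_iff₀ I.cast_card_dom_pos, div_le_iff₀ I.cast_card_dom_pos]

theorem satCond_zero_zero_iff_disjoint :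
    satCond I ⟨c, d, 0, 0⟩ ↔ Disjoint (I.ext c) (I.ext d) := by
  have inter_empty (h : I.ext d = ∅) : I.ext c ∩ I.ext d = ∅ := by rw [h, Finset.inter_empty]
  simp only [satCond, cardC, Interp.ext, ← ge_antisymm_iff, div_eq_zero_iff, Nat.cast_eq_zero,
    Finset.card_eq_zero, Finset.disjoint_iff_inter_eq_empty]
  tauto

theorem ext_union_ext_eq_dom (hl : 1 ≤ l + l') (hc : satCond I ⟨c, .top, l, u⟩)
    (hd : satCond I ⟨d, .top, l', u'⟩) (hcd : Disjoint (I.ext c) (I.ext d)) :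
    I.ext c ∪ I.ext d = I.dom := by
  refine Finset.eq_of_subset_of_card_le
    (Finset.union_subset (I.ext_subset_dom c) (I.ext_subset_dom d)) ?_
  rw [Finset.card_union_of_disjoint hcd, ← Nat.cast_le (α := ℚ)]
  calc (I.dom.card : ℚ)
      ≤ (l + l') * I.dom.card := le_mul_of_one_le_left I.cast_card_dom_pos.le hl
    _ = l * I.dom.card + l' * I.dom.card := add_mul _ _ _
    _ ≤ (I.ext c).card + (I.ext d).card :=
        add_le_add (satCond_top_iff.mp hc).1 (satCond_top_iff.mp hd).1
    _ = ((I.ext c).card + (I.ext d).card : ℕ) := (Nat.cast_add _ _).symm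

theorem exists_mem_dom_notMem_ext (hu : u < 1) (hc : satCond I ⟨c, .top, l, u⟩) :
    ∃ d ∈ I.dom, d ∉ I.ext c := by
  refine Finset.exists_mem_notMem_of_card_lt_card (Nat.cast_lt (α := ℚ).mp ?_)
  calc ((I.ext c).card : ℚ)
      ≤ u * I.dom.card := (satCond_top_iff.mp hc).2
    _ < I.dom.card := mul_lt_of_lt_one_left I.cast_card_dom_pos hu

end Conditionals

section Reduction

variable {α : Type} {ι : Type*}

/-- The concept `A_{λ¹} ⊓ A_{λ²} ⊓ A_{λ³}` associated with a clause `κ = λ¹ ∧ λ² ∧ λ³`. -/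
def clauseConcept (κ : Fin 3 → ℕ × Bool) : Cpt :=
  .inter (.inter (Alit (κ 0)) (Alit (κ 1))) (Alit (κ 2))

theorem mem_ext_clauseConcept {I : Interp α} {d : α} {κ : Fin 3 → ℕ × Bool} :
    d ∈ I.ext (clauseConcept κ) ↔ ∀ j, d ∈ I.ext (Alit (κ j)) := by
  simp only [clauseConcept, Interp.ext, Finset.mem_inter, Fin.forall_fin_succ, and_assoc,
    IsEmpty.forall_iff, and_true, Fin.succ_zero_eq_one, Fin.succ_one_eq_two]

/-- `I` is a model of the knowledge base `K_φ` of the formula `φ` with clauses `lits i`. The formula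
may have infinitely many clauses and variables; `name i` is the index of the concept name `B` used
for the clause `i`. -/
def IsReductionModel (I : Interp α) (name : ι → ℕ) (lits : ι → Fin 3 → ℕ × Bool) (V : Set ℕ) :
    Prop :=
  (∀ i, I.ext (clauseConcept (lits i)) ⊆ I.ext (Bcl (name i)) ∧
    I.ext (Bcl (name i)) ⊆ I.ext Ccpt) ∧
  (∀ x ∈ V,
    satCond I ⟨Apos x, .top, 1/2, 1⟩ ∧
    satCond I ⟨Aneg x, .top, 1/2, 1⟩ ∧
    satCond I ⟨Aneg x, Apos x, 0, 0⟩) ∧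
  satCond I ⟨Ccpt, .top, 0, 1/2⟩

/-- The truth assignment realised by a domain element `d`: the variable `x` is true iff `d` belongs
to `A_x`. -/
noncomputable def assignmentAt (I : Interp α) (d : α) (x : ℕ) : Bool :=
  decide (d ∈ I.ext (Apos x))

theorem mem_ext_Alit_of_assignmentAt_eq {I : Interp α} {d : α} {lit : ℕ × Bool}
    (hd : d ∈ I.ext (Aneg lit.1) ∪ I.ext (Apos lit.1)) (h : assignmentAt I d lit.1 = lit.2) :
    d ∈ I.ext (Alit lit) := by
  obtain ⟨x, _ | _⟩ := lit
  · have not_pos : d ∉ I.ext (Apos x) := of_decide_eq_false h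
    exact (Finset.mem_union.mp hd).resolve_right not_pos
  · exact of_decide_eq_true h

theorem IsReductionModel.exists_falsifying {I : Interp α} {name : ι → ℕ}
    {lits : ι → Fin 3 → ℕ × Bool} {V : Set ℕ} (hI : IsReductionModel I name lits V)
    (hV : ∀ i j, (lits i j).1 ∈ V) :
    ∃ v : ℕ → Bool, ∀ i, ∃ j, v (lits i j).1 ≠ (lits i j).2 := by
  obtain ⟨hclause, hvar, hC⟩ := hI
  obtain ⟨d, hd, hdC⟩ := exists_mem_dom_notMem_ext (by norm_num) hC
  refine ⟨assignmentAt I d, fun i => ?_⟩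
  by_contra! hsat
  have mem_literal (j : Fin 3) : d ∈ I.ext (Alit (lits i j)) := by
    obtain ⟨hpos, hneg, hdisj⟩ := hvar _ (hV i j)
    have cover := ext_union_ext_eq_dom (by norm_num) hneg hpos
      (satCond_zero_zero_iff_disjoint.mp hdisj)
    exact mem_ext_Alit_of_assignmentAt_eq (cover ▸ hd) (hsat j)
  exact hdC ((hclause i).2 ((hclause i).1 (mem_ext_clauseConcept.mpr mem_literal)))

/-- The interpretation with domain `{a, b}` in which `a` realises the assignment `v` and `b` its
complement. Concept names that do not stand for literals hold at `b` only. -/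
noncomputable def twoPointInterp (v : ℕ → Bool) (a b : α) : Interp α where
  dom := {a, b}
  dom_nonempty := Finset.insert_nonempty a {b}
  conc k := if ∃ x, Alit (x, v x) = .atom k then {a} else {b}
  conc_sub k := by split_ifs <;> simp
  role _ := ∅
  role_sub _ := Finset.empty_subset _

theorem Alit_injective : Function.Injective Alit := by
  rintro ⟨x, _ | _⟩ ⟨y, _ | _⟩ <;> simp [Alit, Apos, Aneg]

section TwoPoint

variable (v : ℕ → Bool) (a b : α)

theorem twoPointInterp_ext_Alit (lit : ℕ × Bool) :
    (twoPointInterp v a b).ext (Alit lit) = if v lit.1 = lit.2 then {a} else {b} := by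
  have realised : (∃ x, Alit (x, v x) = Alit lit) ↔ v lit.1 = lit.2 := by
    simp [Alit_injective.eq_iff, Prod.ext_iff]
  obtain ⟨k, hk⟩ : ∃ k, Alit lit = .atom k := by
    obtain ⟨x, _ | _⟩ := lit <;> exact ⟨_, rfl⟩
  simp only [← realised, hk, Interp.ext, twoPointInterp]

theorem twoPointInterp_ext_atom {k : ℕ} (hk : ∀ lit, Alit lit ≠ .atom k) :
    (twoPointInterp v a b).ext (.atom k) = {b} :=
  if_neg fun ⟨_, hx⟩ => hk _ hx

theorem twoPointInterp_ext_Bcl (i : ℕ) : (twoPointInterp v a b).ext (Bcl i) = {b} :=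
  twoPointInterp_ext_atom v a b (by rintro ⟨x, _ | _⟩ <;> simp [Alit, Apos, Aneg])

theorem twoPointInterp_ext_Ccpt : (twoPointInterp v a b).ext Ccpt = {b} :=
  twoPointInterp_ext_atom v a b (by rintro ⟨x, _ | _⟩ <;> simp [Alit, Apos, Aneg])

variable {a b}

theorem satCond_twoPointInterp_atom_top (hab : a ≠ b) (k : ℕ) {l u : ℚ} (hl : l ≤ 1 / 2)
    (hu : 1 / 2 ≤ u) : satCond (twoPointInterp v a b) ⟨.atom k, .top, l, u⟩ := by
  have card_dom : (twoPointInterp v a b).dom.card = 2 := Finset.card_pair hab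
  have card_atom : ((twoPointInterp v a b).ext (.atom k)).card = 1 := by
    simp only [Interp.ext, twoPointInterp]
    split_ifs <;> exact Finset.card_singleton _
  rw [satCond_top_iff, card_dom, card_atom]
  constructor <;> push_cast <;> linarith

theorem disjoint_twoPointInterp_ext_Aneg_Apos (hab : a ≠ b) (x : ℕ) :
    Disjoint ((twoPointInterp v a b).ext (Aneg x)) ((twoPointInterp v a b).ext (Apos x)) := by
  change Disjoint ((twoPointInterp v a b).ext (Alit (x, false)))
    ((twoPointInterp v a b).ext (Alit (x, true)))
  rw [twoPointInterp_ext_Alit, twoPointInterp_ext_Alit]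
  cases v x <;> simp [hab, hab.symm]

variable {v}

theorem isReductionModel_twoPointInterp (hab : a ≠ b) (name : ι → ℕ)
    {lits : ι → Fin 3 → ℕ × Bool} (V : Set ℕ)
    (hv : ∀ i, ∃ j, v (lits i j).1 ≠ (lits i j).2) :
    IsReductionModel (twoPointInterp v a b) name lits V := by
  refine ⟨fun i => ⟨fun d hd => ?_, ?_⟩, fun x _ => ⟨?_, ?_, ?_⟩, ?_⟩
  · obtain ⟨j, hj⟩ := hv i
    have mem_falsified := mem_ext_clauseConcept.mp hd j
    rwa [twoPointInterp_ext_Alit, if_neg hj, ← twoPointInterp_ext_Bcl v a b (name i)]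
      at mem_falsified
  · rw [twoPointInterp_ext_Bcl, twoPointInterp_ext_Ccpt]
  · exact satCond_twoPointInterp_atom_top v hab _ le_rfl (by norm_num)
  · exact satCond_twoPointInterp_atom_top v hab _ le_rfl (by norm_num)
  · exact satCond_zero_zero_iff_disjoint.mpr (disjoint_twoPointInterp_ext_Aneg_Apos v hab x)
  · exact satCond_twoPointInterp_atom_top v hab _ (by norm_num) le_rfl

end TwoPoint

theorem np_hardness_reduction_general [Nontrivial α] (name : ι → ℕ)
    (lits : ι → Fin 3 → ℕ × Bool) (V : Set ℕ) (hV : ∀ i j, (lits i j).1 ∈ V) :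
    (∀ v : ℕ → Bool, ∃ i, ∀ j, v (lits i j).1 = (lits i j).2) ↔
      ¬ ∃ I : Interp α, IsReductionModel I name lits V := by
  constructor
  · rintro valid ⟨I, hI⟩
    obtain ⟨v, hv⟩ := hI.exists_falsifying hV
    obtain ⟨i, hi⟩ := valid v
    obtain ⟨j, hj⟩ := hv i
    exact hj (hi j)
  · intro inconsistent v
    by_contra! hv
    obtain ⟨a, b, hab⟩ := exists_pair_ne α
    exact inconsistent ⟨_, isReductionModel_twoPointInterp hab name V hv⟩

end Reduction

/-- Correctness of the NP-hardness reduction: a 3DNF formula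
`φ = κ₁ ∨ … ∨ κₙ` with clauses `κᵢ = λᵢ¹ ∧ λᵢ² ∧ λᵢ³` over variables `V` is valid iff
the KB `K_φ = (T_φ, C_φ)` is inconsistent. -/
theorem np_hardness_reduction (n : ℕ) (lits : Fin n → Fin 3 → ℕ × Bool)
    (V : Finset ℕ) (hV : ∀ i j, (lits i j).1 ∈ V) :
    (∀ v : ℕ → Bool, ∃ i : Fin n, ∀ j : Fin 3, v (lits i j).1 = (lits i j).2) ↔
      ¬ ∃ I : FInterp,
        (∀ i : Fin n,
          I.ext (.inter (.inter (Alit (lits i 0)) (Alit (lits i 1))) (Alit (lits i 2)))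
              ⊆ I.ext (Bcl i) ∧
          I.ext (Bcl i) ⊆ I.ext Ccpt) ∧
        (∀ x ∈ V,
          satCond I ⟨Apos x, .top, 1/2, 1⟩ ∧
          satCond I ⟨Aneg x, .top, 1/2, 1⟩ ∧
          satCond I ⟨Aneg x, Apos x, 0, 0⟩) ∧
        satCond I ⟨Ccpt, .top, 0, 1/2⟩ :=
  np_hardness_reduction_general Fin.val lits V hV
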